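/- Let L be the line (path) on [n], I_L its binomial edge ideal, and g = x_1 y_n − x_n y_1. Then S/(I_L : g) is a Cohen-Macaulay ring of Krull dimension n + 1. -/

import Mathlib

/-!
The quotient `S / (I_L : g)` is shown to be a finite free module over a polynomial subring
`B = K[θ_0, …, θ_{m+1}]` generated by linear forms, where the path has the vertices `0, …, m`,
so `n = m + 1`. Then the `θ_i` form a regular sequence of length `m + 2 = n + 1` (flat base change
from `B`), the dimension is at most `m + 2` because the quotient is integral over `B`, and no
regular sequence is longer than the dimension (`isCMQuot_of_free`).

The parameters are `θ_0 = y_0`, `θ_i = y_i - x_{i-1}` for `1 ≤ i ≤ m`, and `θ_{m+1} = x_m`. Over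
`B` the remaining variables are `x_0, …, x_{m-1}`, and the binomial of the edge `{i, i + 1}` becomes
`x_i ^ 2` plus terms of smaller weight, for the strictly concave weights `(i + 1) * (m - i)`
(`edgeMinor_sub_sq`). Hence `S / I_L` is free over `B` on the squarefree monomials in the `x_i`
(`exists_squarefree_coords`).

Let `u_j` (`mixed`), `0 ≤ j < m`, be the product of `y_1, …, y_j, x_{j+1}, …, x_{m-1}`. Modulo
`I_L` it kills `g`. Its leading term over `B` is `∏_{r ≠ j} x_r`, and the `B`-span of the `u_j` and
of `x_0 * u_0 = ∏ x_r` is already an ideal of `S / I_L` (`mul_mem_span_mixed`). So the quotient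
by `J = I_L + (u_j)` is free over `B` on the squarefree monomials of degree at most `m - 2`
(`exists_linkIdeal_coords`).

Finally `I_L : g = J` (`edgeIdeal_colon`). Specializing `θ_0 = θ_{m+1} = 1` and all other `θ_i = 0`
makes the ideal `J + (g)` trivial (`specialized_eq_top`), so by Nakayama's lemma it contains a
nonzero element of `B`. As `S / J` is torsion-free over `B`, it follows that `g` is a
nonzerodivisor on `S / J`.
-/

open MvPolynomial CategoryTheory Opposite

noncomputable section

namespace BEIPaper

/-- The `x_i` variable of the polynomial ring `K[x_1,…,x_n,y_1,…,y_n]`,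
which we realize as `MvPolynomial (σ ⊕ σ) K`, where `Sum.inl i ↦ x_i` and
`Sum.inr i ↦ y_i`. -/
def xv (K : Type) [Field K] {σ : Type} (i : σ) : MvPolynomial (σ ⊕ σ) K :=
  X (Sum.inl i)

/-- The `y_i` variable. -/
def yv (K : Type) [Field K] {σ : Type} (i : σ) : MvPolynomial (σ ⊕ σ) K :=
  X (Sum.inr i)

/-- The binomial edge ideal of a graph `G` on the vertex set `[n]`:
generated by the binomials `x_i y_j - x_j y_i` for edges `{i, j}` with `i < j`. -/
def bei (K : Type) [Field K] {n : ℕ} (G : SimpleGraph (Fin n)) :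
    Ideal (MvPolynomial (Fin n ⊕ Fin n) K) :=
  Ideal.span {f | ∃ i j : Fin n, i < j ∧ G.Adj i j ∧
    f = xv K i * yv K j - xv K j * yv K i}

/-- The prime ideal `P_T(G)`: generated by `{x_i, y_i : i ∈ T}` together with the
binomial edge ideals of the complete graphs on the vertex sets of the connected
components of the induced subgraph of `G` on `[n] ∖ T` (equivalently, all binomials
`x_i y_j - x_j y_i` where `i < j` lie outside `T` in the same connected component). -/
def PT (K : Type) [Field K] {n : ℕ} (G : SimpleGraph (Fin n)) (T : Set (Fin n)) :
    Ideal (MvPolynomial (Fin n ⊕ Fin n) K) :=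
  Ideal.span ((xv K '' T) ∪ (yv K '' T) ∪
    {f | ∃ i j : Fin n, ∃ (hi : i ∈ Tᶜ) (hj : j ∈ Tᶜ), i < j ∧
      (G.induce Tᶜ).Reachable ⟨i, hi⟩ ⟨j, hj⟩ ∧
      f = xv K i * yv K j - xv K j * yv K i})

/-- `c(T)`: the number of connected components of the induced subgraph of `G`
on `[n] ∖ T`. -/
def ncomp {n : ℕ} (G : SimpleGraph (Fin n)) (T : Set (Fin n)) : ℕ :=
  Nat.card (G.induce Tᶜ).ConnectedComponent

/-- The graded (irrelevant) maximal ideal of a polynomial ring, generated by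
all the variables. -/
def mIdeal (K : Type) [Field K] (σ : Type) : Ideal (MvPolynomial σ K) :=
  Ideal.span (Set.range X)

/-- The depth of a module `M` with respect to an ideal `I`: the supremum of lengths
of `M`-regular sequences consisting of elements of `I`. -/
def depth {R : Type} [CommRing R] (I : Ideal R) (M : Type) [AddCommGroup M]
    [Module R M] : ℕ∞ :=
  sSup {k : ℕ∞ | ∃ rs : List R, (rs.length : ℕ∞) = k ∧ (∀ r ∈ rs, r ∈ I) ∧
    RingTheory.Sequence.IsRegular M rs}

/-- The (Krull) dimension of a module: the Krull dimension of `R` modulo the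
annihilator of `M`. -/
def mdim (R : Type) [CommRing R] (M : Type) [AddCommGroup M] [Module R M] :
    WithBot ℕ∞ :=
  ringKrullDim (R ⧸ Module.annihilator R M)

/-- `M` is a Cohen-Macaulay `R`-module of dimension `d` (depth and dimension both
being taken with respect to the given (maximal graded) ideal `I`). -/
def IsCMmodOfDim {R : Type} [CommRing R] (I : Ideal R) (M : Type) [AddCommGroup M]
    [Module R M] (d : ℕ) : Prop :=
  (depth I M : WithBot ℕ∞) = mdim R M ∧ mdim R M = (d : ℕ∞)

/-- The quotient `S/J` of a polynomial ring `S` by an ideal `J` is a Cohen-Macaulay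
ring: its depth with respect to the graded maximal ideal equals its Krull dimension. -/
def IsCMQuot (K : Type) [Field K] {σ : Type} (J : Ideal (MvPolynomial σ K)) : Prop :=
  (depth (mIdeal K σ) (MvPolynomial σ K ⧸ J) : WithBot ℕ∞) =
    ringKrullDim (MvPolynomial σ K ⧸ J)

/-- `S/I` is approximately Cohen-Macaulay: there is a homogeneous element `x` of
positive degree in the irrelevant ideal of `R = S/I` (i.e. the image of a homogeneous
polynomial `f` of positive degree) such that `R/x^m R = S/(I + (f^m))` is a
Cohen-Macaulay ring of dimension `dim R - 1` for all `m ≥ 1`. -/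
def IsACM (K : Type) [Field K] {σ : Type} (I : Ideal (MvPolynomial σ K)) : Prop :=
  ∃ (d : ℕ) (f : MvPolynomial σ K), 0 < d ∧ f.IsHomogeneous d ∧
    ∀ m : ℕ, 1 ≤ m →
      IsCMQuot K (I ⊔ Ideal.span {f ^ m}) ∧
      ringKrullDim (MvPolynomial σ K ⧸ (I ⊔ Ideal.span {f ^ m})) + 1 =
        ringKrullDim (MvPolynomial σ K ⧸ I)

/-- The Hilbert series of `S/I` (for a homogeneous ideal `I`), as a power series
over `ℤ`: the `m`-th coefficient is the `K`-dimension of the degree-`m` graded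
component of `S/I`, i.e. of the image of the space of degree-`m` homogeneous
polynomials in `S/I`. -/
def hseries (K : Type) [Field K] {σ : Type} (I : Ideal (MvPolynomial σ K)) :
    PowerSeries ℤ :=
  PowerSeries.mk fun m =>
    (Module.finrank K (Submodule.map (Ideal.Quotient.mkₐ K I).toLinearMap
      (homogeneousSubmodule σ K m)) : ℤ)

/-- The formal power series variable `t`. -/
def t : PowerSeries ℤ := PowerSeries.X

/-- The equidimensional part `U_S(I)` of (a minimal primary decomposition of) `I`:
the intersection of the primary components `I(p)` over the associated primes `p`
with `dim S/p = dim S/I`.  Any such `p` is a minimal prime of `I`, so its primary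
component is independent of the decomposition and equals the saturation
`{x | ∃ s ∉ p, s * x ∈ I}`. -/
def USideal {R : Type} [CommRing R] (I : Ideal R) : Ideal R :=
  sInf {J | ∃ p ∈ associatedPrimes R (R ⧸ I),
    ringKrullDim (R ⧸ p) = ringKrullDim (R ⧸ I) ∧
    J = Ideal.span {x | ∃ s ∉ p, s * x ∈ I}}

/-- `Ext_S^j(S/I, S)`, as an object of `ModuleCat S`.  The `i`-th module of
deficiency of `S/I` is `ω^i(S/I) = Ext_S^{2n-i}(S/I, S)`, i.e. `extSI K I (2*n - i)`. -/
def extSI (K : Type) [Field K] {σ : Type} (I : Ideal (MvPolynomial σ K)) (j : ℕ) :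
    ModuleCat (MvPolynomial σ K) :=
  ((Ext (MvPolynomial σ K) (ModuleCat (MvPolynomial σ K)) j).obj
      (op (ModuleCat.of (MvPolynomial σ K) (MvPolynomial σ K ⧸ I)))).obj
    (ModuleCat.of (MvPolynomial σ K) (MvPolynomial σ K))

/-- The line (path) graph on `[n]` (with `[n]` realized as `Fin n`), with edges
`{i, i+1}` for `1 ≤ i ≤ n-1`. -/
def lineG (n : ℕ) : SimpleGraph (Fin n) :=
  SimpleGraph.fromRel (fun a b => (b : ℕ) = (a : ℕ) + 1)

/-- The cycle of length `n` on `[n]` (with `[n]` realized as `Fin n`), with edges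
`{i, i+1}` for `1 ≤ i ≤ n-1` together with `{1, n}`. -/
def cycleG (n : ℕ) : SimpleGraph (Fin n) :=
  SimpleGraph.fromRel (fun a b =>
    (b : ℕ) = (a : ℕ) + 1 ∨ ((a : ℕ) = 0 ∧ (b : ℕ) = n - 1))

/-- The binomial `g = x_1 y_n - x_n y_1`. -/
def gElt (K : Type) [Field K] {n : ℕ} (hn : 0 < n) : MvPolynomial (Fin n ⊕ Fin n) K :=
  xv K ⟨0, hn⟩ * yv K ⟨n - 1, by omega⟩ - xv K ⟨n - 1, by omega⟩ * yv K ⟨0, hn⟩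

/-- The `i`-th generator `x_2 x_3 ⋯ x_i y_{i+1} ⋯ y_{n-1}` (for `i = 1, …, n-1`)
of the monomial ideal `M`; the product ranges over the labels `p = 2, …, n-1`
(`0`-indexed: `q = p - 1` with `1 ≤ q ≤ n-2`), taking `x_p` when `p ≤ i` and
`y_p` when `p > i`. -/
def mgen (K : Type) [Field K] (n : ℕ) (i : ℕ) : MvPolynomial (Fin n ⊕ Fin n) K :=
  ∏ q ∈ Finset.univ.filter (fun q : Fin n => 0 < (q : ℕ) ∧ (q : ℕ) < n - 1),
    (if (q : ℕ) + 1 ≤ i then xv K q else yv K q)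

/-- The monomial ideal
`M = (x_2 x_3 ⋯ x_{n-1}, x_2 x_3 ⋯ x_{n-2} y_{n-1}, …, x_2 y_3 ⋯ y_{n-1}, y_2 y_3 ⋯ y_{n-1})`. -/
def monoM (K : Type) [Field K] (n : ℕ) : Ideal (MvPolynomial (Fin n ⊕ Fin n) K) :=
  Ideal.span {f | ∃ i : ℕ, 1 ≤ i ∧ i ≤ n - 1 ∧ f = mgen K n i}

/-- The degree of a vertex, as the cardinality of its neighbor set. -/
def deg {n : ℕ} (G : SimpleGraph (Fin n)) (v : Fin n) : ℕ :=
  Nat.card (G.neighborSet v)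

/-- A tree is 3-star like if no vertex has degree `≥ 4`, and either there is at most
one vertex of degree `3`, or there are exactly two vertices of degree `3` and they
are joined by an edge. -/
def ThreeStarLike {n : ℕ} (G : SimpleGraph (Fin n)) : Prop :=
  (∀ v, deg G v ≤ 3) ∧
    ({v | deg G v = 3}.Subsingleton ∨
      ∃ a b : Fin n, a ≠ b ∧ G.Adj a b ∧ {v | deg G v = 3} = {a, b})

/-- The graph `G′` on `[n+1]` obtained from a graph `G` on `[n]` by attaching the
new edge `{v, n+1}` at the vertex `v` of `G`. -/
def extendG {n : ℕ} (G : SimpleGraph (Fin n)) (v : Fin n) : SimpleGraph (Fin (n + 1)) :=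
  SimpleGraph.fromRel (fun a b =>
    (∃ (ha : a ≠ Fin.last n) (hb : b ≠ Fin.last n),
      G.Adj (a.castPred ha) (b.castPred hb)) ∨
    (a = Fin.castSucc v ∧ b = Fin.last n))

/-- The inclusion `S = K[x_1,…,x_n,y_1,…,y_n] → S′ = K[x_1,…,x_{n+1},y_1,…,y_{n+1}]`. -/
def liftS (K : Type) [Field K] (n : ℕ) :
    MvPolynomial (Fin n ⊕ Fin n) K →ₐ[K] MvPolynomial (Fin (n + 1) ⊕ Fin (n + 1)) K :=
  rename (Sum.map Fin.castSucc Fin.castSucc)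

/-! ### Free quotients by triangular systems of squares -/

section Triangular

variable {ι B : Type} [CommRing B]

/-- The `B`-submodule of polynomials all of whose monomials have `W`-weight less than `d`;
the coefficients in `B` are given weight `0`. -/
def lowW (B : Type) [CommRing B] (W : ι → ℕ) (d : ℕ) : Submodule B (MvPolynomial ι B) :=
  restrictSupport B {b | Finsupp.weight W b < d}

lemma lowW_mono (W : ι → ℕ) {d e : ℕ} (h : d ≤ e) : lowW B W d ≤ lowW B W e :=
  restrictSupport_mono B fun _ hb => lt_of_lt_of_le hb h

lemma lowW_mul {W : ι → ℕ} {d e k : ℕ} {p q : MvPolynomial ι B} (hp : p ∈ lowW B W d)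
    (hq : q ∈ lowW B W e) (hk : d + e ≤ k + 1) : p * q ∈ lowW B W k := by
  have h := Submodule.mul_mem_mul hp hq
  rw [lowW, lowW, ← restrictSupport_add] at h
  refine restrictSupport_mono B ?_ h
  rintro _ ⟨a, ha, b, hb, rfl⟩
  simp only [Set.mem_ofPred_eq, map_add] at *
  omega

lemma coeff_of_mem_lowW {W : ι → ℕ} {d : ℕ} {p : MvPolynomial ι B} (hp : p ∈ lowW B W d)
    {a : ι →₀ ℕ} (ha : d ≤ Finsupp.weight W a) : coeff a p = 0 := by
  by_contra h
  have h1 : Finsupp.weight W a < d := hp (Finset.mem_coe.mpr (mem_support_iff.mpr h))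
  omega

lemma X_mem_lowW (W : ι → ℕ) (i : ι) {d : ℕ} (h : W i < d) :
    (X i : MvPolynomial ι B) ∈ lowW B W d := by
  rw [X, lowW, monomial_mem_restrictSupport]
  left
  simpa [Finsupp.weight_single] using h

lemma C_mem_lowW (W : ι → ℕ) (b : B) {d : ℕ} (h : 0 < d) :
    (C b : MvPolynomial ι B) ∈ lowW B W d := by
  rw [C_apply, lowW, monomial_mem_restrictSupport]
  left
  simpa using h

/-- `p` is the monomial with exponent `a` plus terms of strictly smaller weight. -/
def IsTop (W : ι → ℕ) (p : MvPolynomial ι B) (a : ι →₀ ℕ) : Prop :=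
  p - monomial a 1 ∈ lowW B W (Finsupp.weight W a)

lemma IsTop.mem {W : ι → ℕ} {p : MvPolynomial ι B} {a : ι →₀ ℕ} (h : IsTop W p a) :
    p ∈ lowW B W (Finsupp.weight W a + 1) := by
  have h2 : monomial a (1 : B) ∈ lowW B W (Finsupp.weight W a + 1) := by
    rw [lowW, monomial_mem_restrictSupport]
    left
    simp
  simpa using add_mem (lowW_mono W (Nat.le_succ _) h) h2

lemma isTop_monomial (W : ι → ℕ) (a : ι →₀ ℕ) : IsTop W (monomial a (1 : B)) a := by
  simp [IsTop]

lemma isTop_one (W : ι → ℕ) : IsTop W (1 : MvPolynomial ι B) 0 :=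
  isTop_monomial W 0

lemma IsTop.mul {W : ι → ℕ} {p q : MvPolynomial ι B} {a b : ι →₀ ℕ} (hp : IsTop W p a)
    (hq : IsTop W q b) : IsTop W (p * q) (a + b) := by
  have e : p * q - monomial (a + b) 1 =
      (p - monomial a 1) * q + monomial a 1 * (q - monomial b 1) := by
    have : monomial (a + b) (1 : B) = monomial a 1 * monomial b 1 := by simp
    rw [this]; ring
  rw [IsTop, e, map_add]
  exact add_mem (lowW_mul hp hq.mem le_rfl)
    (lowW_mul (isTop_monomial W a).mem hq (by omega))

lemma IsTop.pow {W : ι → ℕ} {p : MvPolynomial ι B} {a : ι →₀ ℕ} (hp : IsTop W p a) (k : ℕ) :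
    IsTop W (p ^ k) (k • a) := by
  induction k with
  | zero => simpa using isTop_one W
  | succ k ih => rw [pow_succ, succ_nsmul]; exact ih.mul hp

lemma IsTop.prod {W : ι → ℕ} {κ : Type} (s : Finset κ) {p : κ → MvPolynomial ι B}
    {a : κ → ι →₀ ℕ} (h : ∀ i, IsTop W (p i) (a i)) :
    IsTop W (∏ i ∈ s, p i) (∑ i ∈ s, a i) := by
  classical
  induction s using Finset.induction_on with
  | empty => simpa using isTop_one W
  | insert i s hi ih =>
    rw [Finset.prod_insert hi, Finset.sum_insert hi]
    exact (h i).mul ih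

/-- A family indexed by exponents that is unitriangular, with respect to the weight, over the
monomials is again a basis. -/
lemma exists_basis_of_isTop (W : ι → ℕ) (E : (ι →₀ ℕ) → MvPolynomial ι B)
    (hE : ∀ a, IsTop W (E a) a) :
    ∃ b : Module.Basis (ι →₀ ℕ) B (MvPolynomial ι B), ∀ a, b a = E a := by
  classical
  set T : MvPolynomial ι B →ₗ[B] MvPolynomial ι B := (basisMonomials ι B).constr B E with hT
  have hTm : ∀ a, T (monomial a 1) = E a := fun a => by
    have := (basisMonomials ι B).constr_basis B E a
    simpa using this
  have hTs : ∀ p, T p = ∑ a ∈ p.support, coeff a p • E a := by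
    intro p
    conv_lhs => rw [p.as_sum]
    rw [map_sum]
    refine Finset.sum_congr rfl fun a _ => ?_
    rw [← hTm a, ← map_smul, smul_monomial, smul_eq_mul, mul_one]
  have hinj : Function.Injective T := by
    rw [injective_iff_map_eq_zero]
    intro p hp
    by_contra hne
    -- the coefficient of `T p` at an exponent of maximal weight is that of `p`
    obtain ⟨a, ha, hmax⟩ := p.support.exists_max_image (Finsupp.weight W)
      (support_nonempty.mpr hne)
    have h1 : coeff a (T p) = coeff a p := by
      rw [hTs, coeff_sum, Finset.sum_eq_single a]
      · have := coeff_of_mem_lowW (hE a) (le_refl _)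
        rw [coeff_sub, coeff_monomial, if_pos rfl, sub_eq_zero] at this
        rw [coeff_smul, this, smul_eq_mul, mul_one]
      · intro b hb hba
        have := coeff_of_mem_lowW (hE b) (hmax b hb)
        rw [coeff_sub, coeff_monomial, if_neg hba, sub_zero] at this
        rw [coeff_smul, this, smul_zero]
      · exact fun h => absurd ha h
    rw [hp, coeff_zero] at h1
    exact (mem_support_iff.mp ha) h1.symm
  have hlow : ∀ d, lowW B W d ≤ LinearMap.range T := by
    intro d
    induction d with
    | zero =>
      rw [lowW, restrictSupport_eq_span, Submodule.span_le]
      rintro _ ⟨b, hb, rfl⟩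
      exact absurd hb (Nat.not_lt_zero _)
    | succ d ih =>
      rw [lowW, restrictSupport_eq_span, Submodule.span_le]
      rintro _ ⟨b, hb, rfl⟩
      have hb' : Finsupp.weight W b ≤ d := Nat.lt_succ_iff.mp hb
      have h1 : E b - monomial b 1 ∈ LinearMap.range T := ih (lowW_mono W hb' (hE b))
      have h2 : E b ∈ LinearMap.range T := ⟨_, hTm b⟩
      simpa using sub_mem h2 h1
  have hsurj : Function.Surjective T := by
    rw [← LinearMap.range_eq_top, eq_top_iff]
    intro p _
    refine hlow (p.support.sup (Finsupp.weight W) + 1) fun a ha => ?_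
    exact Nat.lt_succ_of_le (Finset.le_sup (f := Finsupp.weight W) ha)
  refine ⟨(basisMonomials ι B).map (LinearEquiv.ofBijective T ⟨hinj, hsurj⟩), fun a => ?_⟩
  rw [Module.Basis.map_apply, coe_basisMonomials]
  exact hTm a

/-- If `f i` is `X i ^ 2` plus terms of smaller weight, then `B[X] / (f)` is a free `B`-module on
the squarefree monomials. The map `π` reads off the coordinates. It is obtained from the basis
`∏ X i ^ (a i % 2) * f i ^ (a i / 2)` of `B[X]`, in which the ideal `(f)` is spanned by the
members with some `a i ≥ 2`. -/
lemma exists_squarefree_coords [Fintype ι] [DecidableEq ι] (W : ι → ℕ) (f : ι → MvPolynomial ι B)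
    (hf : ∀ i, f i - X i ^ 2 ∈ lowW B W (2 * W i)) :
    ∃ π : MvPolynomial ι B →ₗ[B] (Finset ι → B),
      (∀ p ∈ Ideal.span (Set.range f), π p = 0) ∧
      (∀ S : Finset ι, π (∏ i ∈ S, X i) = Pi.single S 1) ∧
      (∀ p, p - ∑ S : Finset ι, π p S • ∏ i ∈ S, X i ∈ Ideal.span (Set.range f)) := by
  set E : (ι →₀ ℕ) → MvPolynomial ι B := fun a => ∏ i, (X i ^ (a i % 2) * f i ^ (a i / 2)) with hEdef
  have hE : ∀ a, IsTop W (E a) a := by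
    intro a
    have hX : ∀ i : ι, IsTop W (X i : MvPolynomial ι B) (Finsupp.single i 1) :=
      fun i => isTop_monomial W _
    have hF : ∀ i : ι, IsTop W (f i) (Finsupp.single i 2) := by
      intro i
      have := hf i
      rw [X_pow_eq_monomial] at this
      simpa [IsTop, Finsupp.weight_single] using this
    have h := IsTop.prod Finset.univ (fun i => ((hX i).pow (a i % 2)).mul ((hF i).pow (a i / 2)))
    convert h using 1
    ext j
    simp only [Finsupp.smul_single, smul_eq_mul, mul_one, Finsupp.coe_finsetSum,
      Finset.sum_apply, Finsupp.add_apply, Finsupp.single_apply]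
    rw [Finset.sum_eq_single j]
    · simp only [if_true]; omega
    · intro i _ hij; simp [hij]
    · simp
  obtain ⟨b, hb⟩ := exists_basis_of_isTop W E hE
  have hmul : ∀ i a, f i * E a = E (a + Finsupp.single i 2) := by
    intro i a
    simp only [hEdef]
    rw [← Finset.mul_prod_erase _ _ (Finset.mem_univ i),
      ← Finset.mul_prod_erase _ _ (Finset.mem_univ i)]
    have : ∀ j ∈ Finset.univ.erase i, (a + Finsupp.single i 2 : ι →₀ ℕ) j = a j := by
      intro j hj
      simp [Finset.ne_of_mem_erase hj]
    have hprod : ∏ j ∈ Finset.univ.erase i, (X j ^ ((a + Finsupp.single i 2 : ι →₀ ℕ) j % 2) *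
        f j ^ ((a + Finsupp.single i 2 : ι →₀ ℕ) j / 2)) =
        ∏ j ∈ Finset.univ.erase i, (X j ^ (a j % 2) * f j ^ (a j / 2)) :=
      Finset.prod_congr rfl fun j hj => by rw [this j hj]
    rw [hprod]
    have h1 : (a + Finsupp.single i 2 : ι →₀ ℕ) i % 2 = a i % 2 := by simp
    have h2 : (a + Finsupp.single i 2 : ι →₀ ℕ) i / 2 = a i / 2 + 1 := by simp
    rw [h1, h2]
    ring
  set ind : Finset ι → (ι →₀ ℕ) := fun S => Finsupp.equivFunOnFinite.symm fun i =>
    if i ∈ S then 1 else 0 with hind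
  have hindi : ∀ S i, ind S i = if i ∈ S then 1 else 0 := fun S i => rfl
  have hEind : ∀ S, E (ind S) = ∏ i ∈ S, X i := by
    intro S
    simp only [hEdef, hindi]
    rw [← Finset.prod_subset (Finset.subset_univ S)]
    · exact Finset.prod_congr rfl fun i hi => by simp [hi]
    · intro i _ hi; simp [hi]
  have hindinj : Function.Injective ind := by
    intro S T h
    ext i
    have := DFunLike.congr_fun h i
    rw [hindi, hindi] at this
    by_cases h1 : i ∈ S <;> by_cases h2 : i ∈ T <;> simp_all
  have hEI : ∀ a, (∃ i, 2 ≤ a i) → E a ∈ Ideal.span (Set.range f) := by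
    rintro a ⟨i, hi⟩
    have : a = (a - Finsupp.single i 2) + Finsupp.single i 2 := by
      ext j
      by_cases h : i = j
      · subst h; simp; omega
      · simp [Ne.symm h]
    rw [this, ← hmul]
    exact Ideal.mul_mem_right _ _ (Ideal.subset_span ⟨i, rfl⟩)
  have hsq : ∀ a : ι →₀ ℕ, (∃ i, 2 ≤ a i) ∨ ∃ S, a = ind S := by
    intro a
    by_cases h : ∃ i, 2 ≤ a i
    · exact Or.inl h
    · push Not at h
      refine Or.inr ⟨Finset.univ.filter fun i => a i = 1, ?_⟩
      ext i
      rw [hindi]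
      have := h i
      by_cases h1 : a i = 1
      · simp [h1]
      · simp [h1]; omega
  set π : MvPolynomial ι B →ₗ[B] (Finset ι → B) := LinearMap.pi fun S => b.coord (ind S) with hπ
  have hπE : ∀ a S, π (E a) S = if a = ind S then 1 else 0 := by
    intro a S
    simp only [hπ, LinearMap.pi_apply, Module.Basis.coord_apply]
    rw [← hb a, b.repr_self, Finsupp.single_apply]
  have hπZ : ∀ S : Finset ι, π (∏ i ∈ S, X i) = Pi.single S 1 := by
    intro S
    ext T
    rw [← hEind, hπE, Pi.single_apply]
    by_cases h : T = S
    · simp [h]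
    · rw [if_neg h, if_neg]
      exact fun h' => h (hindinj h').symm
  refine ⟨π, ?_, hπZ, ?_⟩
  · intro p hp
    have key : ∀ i, π ∘ₗ LinearMap.mulLeft B (f i) = 0 := by
      intro i
      refine b.ext fun a => ?_
      ext S
      rw [hb]
      simp only [LinearMap.comp_apply, LinearMap.mulLeft_apply, LinearMap.zero_apply,
        Pi.zero_apply]
      rw [hmul, hπE, if_neg]
      intro h
      have := DFunLike.congr_fun h i
      rw [hindi] at this
      simp only [Finsupp.add_apply, Finsupp.single_eq_same] at this
      split_ifs at this <;> omega
    induction hp using Submodule.span_induction with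
    | mem x hx =>
      obtain ⟨i, rfl⟩ := hx
      simpa using LinearMap.congr_fun (key i) 1
    | zero => simp
    | add x y _ _ hx hy => rw [map_add, hx, hy, add_zero]
    | smul a x hx _ =>
      clear * - hx key
      induction hx using Submodule.span_induction generalizing a with
      | mem x hx =>
        obtain ⟨i, rfl⟩ := hx
        rw [smul_eq_mul, mul_comm]
        exact LinearMap.congr_fun (key i) a
      | zero => simp
      | add x y _ _ hx hy => rw [smul_add, map_add, hx, hy, add_zero]
      | smul c x _ hx => rw [smul_smul]; exact hx _
  · intro p
    set Q : MvPolynomial ι B →ₗ[B] MvPolynomial ι B :=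
      LinearMap.id - ∑ S : Finset ι, ((LinearMap.proj S) ∘ₗ π).smulRight (∏ i ∈ S, X i) with hQ
    have hQp : ∀ p, Q p = p - ∑ S : Finset ι, π p S • ∏ i ∈ S, X i := by
      intro p; simp [hQ]
    rw [← hQp]
    have hp : p ∈ Submodule.span B (Set.range b) := by rw [b.span_eq]; trivial
    have : Submodule.span B (Set.range b) ≤
        ((Ideal.span (Set.range f)).restrictScalars B).comap Q := by
      rw [Submodule.span_le]
      rintro _ ⟨a, rfl⟩
      simp only [SetLike.mem_coe, Submodule.mem_comap, Submodule.restrictScalars_mem]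
      rw [hb, hQp]
      rcases hsq a with h | ⟨S, rfl⟩
      · have h0 : ∀ S, π (E a) S = 0 := by
          intro S
          rw [hπE, if_neg]
          rintro rfl
          obtain ⟨i, hi⟩ := h
          rw [hindi] at hi
          split_ifs at hi <;> omega
        simpa [h0] using hEI a h
      · rw [hEind, hπZ, Finset.sum_eq_single S]
        · simp
        · intro T _ hT; simp [hT]
        · simp
    exact this hp

end Triangular

/-! ### Products of entries of a path of columns -/

section Path

variable {R : Type} [CommRing R] {m : ℕ} {x y : ℕ → R}

/-- If the `2 × 2` minors of consecutive columns `(x i, y i)` vanish, then the minor on columns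
`i ≤ j` is killed by any product containing one entry of each column strictly in between. -/
lemma prod_choice_mul_minor (h : ∀ i < m, x i * y (i + 1) = x (i + 1) * y i)
    (c : ℕ → R) (hc : ∀ q, c q = x q ∨ c q = y q) (i j : ℕ) (hij : i ≤ j) (hj : j ≤ m) :
    (∏ q ∈ Finset.Ioo i j, c q) * (x i * y j - x j * y i) = 0 := by
  induction j, hij using Nat.le_induction with
  | base => simp
  | succ j hij ih =>
    have ih := ih (by omega)
    have hr := h j (by omega)
    rcases Nat.eq_or_lt_of_le hij with rfl | hlt
    · rw [hr]; simp
    · have hI : Finset.Ioo i (j + 1) = insert j (Finset.Ioo i j) := by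
        ext q; simp only [Finset.mem_Ioo, Finset.mem_insert]; omega
      rw [hI, Finset.prod_insert (by simp)]
      rcases hc j with hcj | hcj <;> rw [hcj]
      · linear_combination x (j + 1) * ih + (∏ q ∈ Finset.Ioo i j, c q) * x i * hr
      · linear_combination y (j + 1) * ih + (∏ q ∈ Finset.Ioo i j, c q) * y i * hr

lemma prod_choice_mul_minor_of_subset (h : ∀ i < m, x i * y (i + 1) = x (i + 1) * y i)
    (c : ℕ → R) (hc : ∀ q, c q = x q ∨ c q = y q) (i j : ℕ) (hij : i ≤ j) (hj : j ≤ m)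
    (s : Finset ℕ) (hs : Finset.Ioo i j ⊆ s) :
    (∏ q ∈ s, c q) * (x i * y j - x j * y i) = 0 := by
  rw [← Finset.prod_sdiff hs, mul_assoc, prod_choice_mul_minor h c hc i j hij hj, mul_zero]

/-- The product over the interior vertices `1, …, m - 1` of the path on `0, …, m` that takes the
`y`-variable at the vertices `≤ j` and the `x`-variable at the others. -/
def mixed (x y : ℕ → R) (m j : ℕ) : R :=
  ∏ q ∈ Finset.Ico 1 m, if q ≤ j then y q else x q

lemma mixed_mul_minor (h : ∀ i < m, x i * y (i + 1) = x (i + 1) * y i) (j : ℕ) :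
    mixed x y m j * (x 0 * y m - x m * y 0) = 0 :=
  prod_choice_mul_minor_of_subset h _ (fun q => by split_ifs <;> simp) 0 m (Nat.zero_le _) le_rfl _
    fun q hq => by simp only [Finset.mem_Ioo, Finset.mem_Ico] at *; omega

lemma mixed_rel (h : ∀ i < m, x i * y (i + 1) = x (i + 1) * y i) (j k : ℕ) (hj : j + 2 ≤ m)
    (hk : k ≤ m) : y k * mixed x y m j = x k * mixed x y m (j + 1) := by
  have hmem : j + 1 ∈ Finset.Ico 1 m := by simp; omega
  set c : ℕ → R := fun q => if q ≤ j then y q else x q with hc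
  have hcc : ∀ q, c q = x q ∨ c q = y q := fun q => by simp only [hc]; split_ifs <;> simp
  have e1 : mixed x y m j = x (j + 1) * ∏ q ∈ (Finset.Ico 1 m).erase (j + 1), c q := by
    rw [mixed, ← Finset.mul_prod_erase _ _ hmem, if_neg (by omega)]
  have e2 : mixed x y m (j + 1) = y (j + 1) * ∏ q ∈ (Finset.Ico 1 m).erase (j + 1), c q := by
    rw [mixed, ← Finset.mul_prod_erase _ _ hmem, if_pos le_rfl]
    congr 1
    refine Finset.prod_congr rfl fun q hq => ?_
    have := Finset.ne_of_mem_erase hq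
    simp only [hc]
    by_cases hqj : q ≤ j
    · rw [if_pos hqj, if_pos (by omega)]
    · rw [if_neg hqj, if_neg (by omega)]
  rw [e1, e2]
  rcases le_total k (j + 1) with hkj | hkj
  · have := prod_choice_mul_minor_of_subset h c hcc k (j + 1) hkj (by omega)
      ((Finset.Ico 1 m).erase (j + 1)) fun q hq => by
        simp only [Finset.mem_Ioo, Finset.mem_Ico, Finset.mem_erase] at *; omega
    linear_combination -this
  · have := prod_choice_mul_minor_of_subset h c hcc (j + 1) k hkj (by omega)
      ((Finset.Ico 1 m).erase (j + 1)) fun q hq => by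
        simp only [Finset.mem_Ioo, Finset.mem_Ico, Finset.mem_erase] at *; omega
    linear_combination this

variable {B : Type} [CommRing B] [Algebra B R]

/-- The `B`-span of the products `mixed j`, together with `x 0 * mixed 0`, is stable under
multiplication by the `x k`: by `mixed_rel`, modulo the span of the `mixed j` the product
`x k * mixed j` only depends on `k - j`, and it vanishes when `k ≠ j`. -/
lemma mul_mem_span_mixed (h : ∀ i < m, x i * y (i + 1) = x (i + 1) * y i) (hm : 2 ≤ m)
    (th : ℕ → B) (hy0 : y 0 = algebraMap B R (th 0))
    (hy : ∀ i < m, y (i + 1) = x i + algebraMap B R (th (i + 1)))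
    (hx : x m = algebraMap B R (th (m + 1))) {k : ℕ} (hk : k < m) {v : R}
    (hv : v ∈ Submodule.span B (mixed x y m '' Set.Iio m) ⊔ Submodule.span B {x 0 * mixed x y m 0}) :
    x k * v ∈
      Submodule.span B (mixed x y m '' Set.Iio m) ⊔ Submodule.span B {x 0 * mixed x y m 0} := by
  set V := Submodule.span B (mixed x y m '' Set.Iio m) with hV
  set U := V ⊔ Submodule.span B {x 0 * mixed x y m 0} with hU
  have hmV : ∀ (b : B) {j}, j < m → algebraMap B R b * mixed x y m j ∈ V := fun b j hj => by
    rw [← Algebra.smul_def]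
    exact V.smul_mem _ (Submodule.subset_span ⟨j, hj, rfl⟩)
  have hlt : ∀ k j, k < j → j < m → x k * mixed x y m j ∈ V := by
    intro k
    induction k with
    | zero =>
      intro j h1 h2
      obtain ⟨j, rfl⟩ := Nat.exists_eq_succ_of_ne_zero h1.ne'
      rw [Nat.succ_eq_add_one, ← mixed_rel h j 0 (by omega) (by omega), hy0]
      exact hmV _ (by omega)
    | succ k ih =>
      intro j h1 h2
      obtain ⟨j, rfl⟩ := Nat.exists_eq_succ_of_ne_zero (by omega : j ≠ 0)
      rw [Nat.succ_eq_add_one, ← mixed_rel h j (k + 1) (by omega) (by omega), hy k (by omega),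
        add_mul]
      exact add_mem (ih j (by omega) (by omega)) (hmV _ (by omega))
  have hgt : ∀ d k j, k + d + 1 = m → j < k → x k * mixed x y m j ∈ V := by
    intro d
    induction d with
    | zero =>
      intro k j h1 h2
      have e : x k * mixed x y m j = algebraMap B R (th (m + 1)) * mixed x y m (j + 1) -
          algebraMap B R (th (k + 1)) * mixed x y m j := by
        have h3 := mixed_rel h j (k + 1) (by omega) (by omega)
        rw [hy k (by omega)] at h3
        have h4 : k + 1 = m := by omega
        rw [← hx, ← h4]
        rw [h4] at h3 ⊢
        linear_combination h3
      rw [e]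
      exact sub_mem (hmV _ (by omega)) (hmV _ (by omega))
    | succ d ih =>
      intro k j h1 h2
      have e : x k * mixed x y m j = x (k + 1) * mixed x y m (j + 1) -
          algebraMap B R (th (k + 1)) * mixed x y m j := by
        have h3 := mixed_rel h j (k + 1) (by omega) (by omega)
        rw [hy k (by omega)] at h3
        linear_combination h3
      rw [e]
      exact sub_mem (ih _ _ (by omega) (by omega)) (hmV _ (by omega))
  have hne : ∀ k j, k < m → j < m → k ≠ j → x k * mixed x y m j ∈ V := by
    intro k j h1 h2 h3
    rcases lt_or_gt_of_ne h3 with h4 | h4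
    · exact hlt k j h4 h2
    · exact hgt (m - 1 - k) k j (by omega) h4
  have hdiag : ∀ j, j < m → x j * mixed x y m j - x 0 * mixed x y m 0 ∈ V := by
    intro j
    induction j with
    | zero => intro _; simp
    | succ j ih =>
      intro h1
      have h3 := mixed_rel h j (j + 1) (by omega) (by omega)
      rw [hy j (by omega)] at h3
      have e : x (j + 1) * mixed x y m (j + 1) - x 0 * mixed x y m 0 =
          (x j * mixed x y m j - x 0 * mixed x y m 0) +
            algebraMap B R (th (j + 1)) * mixed x y m j := by linear_combination -h3
      rw [e]
      exact add_mem (ih (by omega)) (hmV _ (by omega))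
  have hVU : V ≤ U := le_sup_left
  have hw : x 0 * mixed x y m 0 ∈ U :=
    le_sup_right (a := V) (Submodule.mem_span_singleton_self _)
  have hVmul : ∀ k < m, ∀ v ∈ V, x k * v ∈ U := by
    intro k hk v hv
    have : V ≤ U.comap (LinearMap.mulLeft B (x k)) := by
      rw [hV, Submodule.span_le]
      rintro _ ⟨j, hj, rfl⟩
      simp only [Submodule.comap_coe, Set.mem_preimage, LinearMap.mulLeft_apply, SetLike.mem_coe]
      by_cases hkj : k = j
      · subst hkj
        simpa using add_mem (hVU (hdiag k hk)) hw
      · exact hVU (hne k j hk hj hkj)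
    exact this hv
  obtain ⟨v, hvV, _, hw', rfl⟩ := Submodule.mem_sup.mp hv
  obtain ⟨b, rfl⟩ := Submodule.mem_span_singleton.mp hw'
  rw [mul_add, mul_smul_comm]
  refine add_mem (hVmul k hk v hvV) (U.smul_mem _ ?_)
  -- since `m ≥ 2` there is an index `j ≠ k`, and `x 0 * mixed 0` may be replaced by `x j * mixed j`
  obtain ⟨j, hj, hjk⟩ : ∃ j < m, k ≠ j := by
    rcases Nat.eq_zero_or_pos k with h0 | h0
    · exact ⟨1, by omega, by omega⟩
    · exact ⟨0, by omega, by omega⟩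
  have e : x k * (x 0 * mixed x y m 0) = x j * (x k * mixed x y m j) -
      x k * (x j * mixed x y m j - x 0 * mixed x y m 0) := by ring
  rw [e]
  exact sub_mem (hVmul j hj _ (hne k j hk hj hjk)) (hVmul k hk _ (hdiag j hj))

end Path

/-! ### The path ideal over the parameters -/

section FreeQuotient

variable {B : Type} [CommRing B] (m : ℕ) (th : ℕ → B)

/-- The `x`-variables of the path on `0, …, m` after the change of coordinates: `x i` is a
variable for `i < m`, and `x m` is the parameter `th (m + 1)`. -/
def px (i : ℕ) : MvPolynomial (Fin m) B :=
  if h : i < m then X ⟨i, h⟩ else C (th (m + 1))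

/-- The `y`-variables of the path on `0, …, m` after the change of coordinates: `y 0` is the
parameter `th 0`, and `y (i + 1) - x i` is the parameter `th (i + 1)`. -/
def py : ℕ → MvPolynomial (Fin m) B
  | 0 => C (th 0)
  | i + 1 => px m th i + C (th (i + 1))

/-- The binomial of the edge `{i, i + 1}`. -/
def edgeMinor (i : Fin m) : MvPolynomial (Fin m) B :=
  px m th i * py m th (i + 1) - px m th (i + 1) * py m th i

/-- The binomial edge ideal of the path in the new coordinates. -/
def edgeIdeal : Ideal (MvPolynomial (Fin m) B) := Ideal.span (Set.range (edgeMinor m th))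

/-- The binomial edge ideal together with the products `mixed j`, `j < m`. -/
def linkIdeal : Ideal (MvPolynomial (Fin m) B) :=
  edgeIdeal m th ⊔ Ideal.span (mixed (px m th) (py m th) m '' Set.Iio m)

variable {m th}

lemma px_of_lt {i : ℕ} (h : i < m) : px m th i = X ⟨i, h⟩ := dif_pos h

lemma px_self : px m th m = C (th (m + 1)) := dif_neg (lt_irrefl m)

/-- With the concave weights `(i + 1) * (m - i)` the leading form of the binomial of the edge
`{i, i + 1}` is `X i ^ 2`. -/
lemma edgeMinor_sub_sq (i : Fin m) : edgeMinor m th i - X i ^ 2 ∈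
    lowW B (fun q : Fin m => ((q : ℕ) + 1) * (m - q)) (2 * (((i : ℕ) + 1) * (m - i))) := by
  set W : Fin m → ℕ := fun q : Fin m => ((q : ℕ) + 1) * (m - q) with hW
  have hx : ∀ j, px m th j ∈ lowW B W ((j + 1) * (m - j) + 1) := by
    intro j
    by_cases h : j < m
    · rw [px_of_lt h]
      exact X_mem_lowW W _ (Nat.lt_succ_self _)
    · rw [px, dif_neg h]
      exact C_mem_lowW W _ (Nat.succ_pos _)
  have hy : ∀ j, py m th j ∈ lowW B W (j * (m + 1 - j) + 1) := by
    rintro (_ | j)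
    · exact C_mem_lowW W _ (Nat.succ_pos _)
    · rw [py, Nat.add_sub_add_right]
      exact add_mem (hx j) (C_mem_lowW W _ (Nat.succ_pos _))
  obtain ⟨i, hi⟩ := i
  have e : edgeMinor m th ⟨i, hi⟩ - X ⟨i, hi⟩ ^ 2 =
      X ⟨i, hi⟩ * C (th (i + 1)) - px m th (i + 1) * py m th i := by
    rw [edgeMinor, py]
    simp only [px_of_lt hi]
    ring
  obtain ⟨k, rfl⟩ : ∃ k, m = i + k + 1 := ⟨m - i - 1, by omega⟩
  simp only at *
  have e1 : i + k + 1 - i = k + 1 := by omega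
  have e2 : i + k + 1 - (i + 1) = k := by omega
  have e3 : i + k + 1 + 1 - i = k + 2 := by omega
  rw [e]
  refine sub_mem (lowW_mul (X_mem_lowW W _ (Nat.lt_succ_self _)) (C_mem_lowW W _ Nat.one_pos) ?_)
    (lowW_mul (hx _) (hy _) ?_)
  · simp only [hW, e1]
    nlinarith
  · rw [e1, e2, e3]
    nlinarith

lemma mixed_eq_prod (j : Fin m) : mixed (px m th) (py m th) m j =
    ∏ r ∈ Finset.univ.erase j, (X r + C (if r < j then th (r + 1) else 0)) := by
  symm
  rw [mixed]
  refine Finset.prod_bij (fun r _ => if r < j then (r : ℕ) + 1 else r) ?_ ?_ ?_ ?_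
  · intro r hr
    have h1 := Finset.ne_of_mem_erase hr
    have h2 : (r : ℕ) ≠ j := fun h => h1 (Fin.ext h)
    have h3 := r.2
    have h4 := j.2
    simp only [Finset.mem_Ico, Fin.lt_def]
    split_ifs <;> omega
  · intro r hr s hs h
    have h1 := Finset.ne_of_mem_erase hr
    have h2 : (r : ℕ) ≠ j := fun h => h1 (Fin.ext h)
    have h1' := Finset.ne_of_mem_erase hs
    have h2' : (s : ℕ) ≠ j := fun h => h1' (Fin.ext h)
    simp only [Fin.lt_def] at h
    apply Fin.ext
    split_ifs at h <;> omega
  · intro q hq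
    rw [Finset.mem_Ico] at hq
    by_cases hqj : q ≤ j
    · refine ⟨⟨q - 1, by omega⟩, ?_, ?_⟩
      · simp [Fin.ext_iff]; omega
      · simp only [Fin.lt_def]
        rw [if_pos (by omega)]; omega
    · refine ⟨⟨q, by omega⟩, ?_, ?_⟩
      · simp [Fin.ext_iff]; omega
      · simp only [Fin.lt_def]
        rw [if_neg (by omega)]
  · intro r hr
    have h1 := Finset.ne_of_mem_erase hr
    have h2 : (r : ℕ) ≠ j := fun h => h1 (Fin.ext h)
    simp only [Fin.lt_def]
    by_cases h : (r : ℕ) < j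
    · simp only [h, if_true]
      rw [if_pos (by omega), py, px_of_lt r.2]
    · simp only [h, if_false]
      rw [if_neg (by omega), px_of_lt r.2]
      simp

lemma px_zero_mul_mixed (hm : 0 < m) :
    px m th 0 * mixed (px m th) (py m th) m 0 = ∏ r : Fin m, X r := by
  have e : mixed (px m th) (py m th) m 0 =
      ∏ r ∈ Finset.univ.erase (⟨0, hm⟩ : Fin m), X r := by
    have := mixed_eq_prod (th := th) (⟨0, hm⟩ : Fin m)
    refine this.trans ?_
    refine Finset.prod_congr rfl fun r _ => ?_
    simp [Fin.lt_def]
  rw [e, px_of_lt hm, Finset.mul_prod_erase _ _ (Finset.mem_univ _)]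

/-- The quotient by `linkIdeal` is free over `B`, on the squarefree monomials of degree
at most `m - 2`: the products `mixed j` have the leading terms `∏_{r ≠ j} X r`. -/
lemma exists_linkIdeal_coords (hm : 2 ≤ m) :
    ∃ φ : MvPolynomial (Fin m) B →ₗ[B] ({S : Finset (Fin m) // S.card + 2 ≤ m} → B),
      Function.Surjective φ ∧ LinearMap.ker φ = (linkIdeal m th).restrictScalars B := by
  classical
  obtain ⟨π, hπ0, hπ1, hπ2⟩ := exists_squarefree_coords _ (edgeMinor m th) edgeMinor_sub_sq
  set u : Fin m → MvPolynomial (Fin m) B := fun j => mixed (px m th) (py m th) m j with hu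
  set w : MvPolynomial (Fin m) B := px m th 0 * mixed (px m th) (py m th) m 0 with hw
  have hπw : π w = Pi.single Finset.univ 1 := by rw [hw, px_zero_mul_mixed (by omega), hπ1]
  have hπu : ∀ j T, ¬ T ⊆ Finset.univ.erase j → π (u j) T = 0 := by
    intro j T hT
    simp only [hu]
    rw [mixed_eq_prod, Finset.prod_add, map_sum, Finset.sum_apply]
    refine Finset.sum_eq_zero fun t ht => ?_
    rw [← map_prod, mul_comm, ← smul_eq_C_mul, map_smul, hπ1, Pi.smul_apply, Pi.single_eq_of_ne]
    · simp
    · rintro rfl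
      exact hT (Finset.mem_powerset.mp ht)
  have hπu1 : ∀ j, π (u j) (Finset.univ.erase j) = 1 := by
    intro j
    simp only [hu]
    rw [mixed_eq_prod, Finset.prod_add, map_sum, Finset.sum_apply,
      Finset.sum_eq_single (Finset.univ.erase j)]
    · simp [hπ1]
    · intro t ht hne
      rw [← map_prod, mul_comm, ← smul_eq_C_mul, map_smul, hπ1, Pi.smul_apply, Pi.single_eq_of_ne]
      · simp
      · exact hne.symm
    · simp
  have hπu2 : ∀ j k, π (u j) (Finset.univ.erase k) = if j = k then 1 else 0 := by
    intro j k
    split_ifs with h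
    · rw [← h, hπu1]
    · refine hπu j _ fun hs => ?_
      have : j ∈ Finset.univ.erase k := by simp [h]
      simpa using hs this
  have hπu3 : ∀ j, π (u j) Finset.univ = 0 := fun j =>
    hπu j _ fun hs => by simpa using hs (Finset.mem_univ j)
  set φ : MvPolynomial (Fin m) B →ₗ[B] ({S : Finset (Fin m) // S.card + 2 ≤ m} → B) :=
    LinearMap.pi fun S => (LinearMap.proj S.1) ∘ₗ π -
      ∑ j, (π (u j) S.1) • ((LinearMap.proj (Finset.univ.erase j)) ∘ₗ π) with hφdef
  have hφ : ∀ p S, φ p S = π p S.1 - ∑ j, π (u j) S.1 * π p (Finset.univ.erase j) := by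
    intro p S; simp [hφdef]
  have hcase : ∀ T : Finset (Fin m), T.card + 2 ≤ m ∨ (∃ j, T = Finset.univ.erase j) ∨
      T = Finset.univ := by
    intro T
    by_cases h1 : T = Finset.univ
    · exact Or.inr (Or.inr h1)
    by_cases h2 : T.card + 2 ≤ m
    · exact Or.inl h2
    obtain ⟨j, hj⟩ : ∃ j, j ∉ T := by
      by_contra h; push Not at h; exact h1 (Finset.eq_univ_iff_forall.mpr h)
    refine Or.inr (Or.inl ⟨j, Finset.eq_of_subset_of_card_le ?_ ?_⟩)
    · intro r hr; simp only [Finset.mem_erase, Finset.mem_univ, and_true]; rintro rfl; exact hj hr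
    · rw [Finset.card_erase_of_mem (Finset.mem_univ _), Finset.card_univ, Fintype.card_fin]; omega
  have hS1 : ∀ S : {S : Finset (Fin m) // S.card + 2 ≤ m}, S.1 ≠ Finset.univ := by
    rintro ⟨S, hS⟩ h
    simp only at h
    rw [h, Finset.card_univ, Fintype.card_fin] at hS; omega
  have hS2 : ∀ (S : {S : Finset (Fin m) // S.card + 2 ≤ m}) j, S.1 ≠ Finset.univ.erase j := by
    rintro ⟨S, hS⟩ j h
    simp only at h
    rw [h, Finset.card_erase_of_mem (Finset.mem_univ _), Finset.card_univ, Fintype.card_fin] at hS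
    omega
  have hE : ∀ j : Fin m, Finset.univ.erase j ≠ Finset.univ := fun j h => by
    have := Finset.mem_univ j
    rw [← h] at this
    simp at this
  have hφf : ∀ p ∈ edgeIdeal m th, φ p = 0 := by
    intro p hp
    ext S
    simp [hφ, hπ0 p hp]
  have hφu : ∀ j, φ (u j) = 0 := by
    intro j
    ext S
    simp [hφ, hπu2]
  have hφw : φ w = 0 := by
    ext S
    rw [hφ, hπw]
    simp [hE, hS1 S]
  refine ⟨φ, ?_, le_antisymm ?_ ?_⟩
  · rw [← LinearMap.range_eq_top, eq_top_iff, ← (Pi.basisFun B _).span_eq, Submodule.span_le]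
    rintro _ ⟨S, rfl⟩
    refine ⟨∏ i ∈ S.1, X i, ?_⟩
    ext T
    rw [hφ, hπ1]
    have : ∀ j, (Pi.single S.1 1 : Finset (Fin m) → B) (Finset.univ.erase j) = 0 := fun j =>
      Pi.single_eq_of_ne (hS2 S j).symm _
    simp [this, Pi.single_apply, Subtype.ext_iff]
  · intro p hp
    rw [LinearMap.mem_ker] at hp
    rw [Submodule.restrictScalars_mem]
    set p' := p - ∑ j, π p (Finset.univ.erase j) • u j - π p Finset.univ • w with hp'
    have huJ : ∀ j, u j ∈ linkIdeal m th := fun j =>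
      Ideal.mem_sup_right (Ideal.subset_span ⟨j, j.2, rfl⟩)
    have hwJ : w ∈ linkIdeal m th := Ideal.mul_mem_left _ _
      (Ideal.mem_sup_right (Ideal.subset_span ⟨0, by simp; omega, rfl⟩))
    have hp'0 : π p' = 0 := by
      ext T
      simp only [hp', map_sub, map_sum, map_smul, Pi.sub_apply, Finset.sum_apply, Pi.smul_apply,
        smul_eq_mul, hπw, Pi.zero_apply]
      rcases hcase T with hT | ⟨k, rfl⟩ | rfl
      · have h := congr_fun hp ⟨T, hT⟩
        rw [hφ] at h
        rw [Pi.single_eq_of_ne (hS1 ⟨T, hT⟩), mul_zero, sub_zero]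
        simpa [mul_comm] using h
      · simp [hπu2, hE]
      · simp [hπu3]
    have hp'f : p' ∈ linkIdeal m th := by
      have := hπ2 p'
      simp only [hp'0, Pi.zero_apply, zero_smul, Finset.sum_const_zero, sub_zero] at this
      exact Ideal.mem_sup_left this
    have : p = p' + ∑ j, π p (Finset.univ.erase j) • u j + π p Finset.univ • w := by
      rw [hp']; ring
    rw [this]
    refine add_mem (add_mem hp'f (sum_mem fun j _ => ?_)) ?_
    · exact Submodule.smul_of_tower_mem _ _ (huJ j)
    · exact Submodule.smul_of_tower_mem _ _ hwJ
  · -- the images of the `mixed j` and of `w` span a submodule stable under multiplication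
    set mk := Ideal.Quotient.mkₐ B (edgeIdeal m th) with hmk
    have hmk0 : ∀ p, mk p = 0 ↔ p ∈ edgeIdeal m th := fun p => Ideal.Quotient.eq_zero_iff_mem
    set x : ℕ → MvPolynomial (Fin m) B ⧸ edgeIdeal m th := fun i => mk (px m th i) with hxd
    set y : ℕ → MvPolynomial (Fin m) B ⧸ edgeIdeal m th := fun i => mk (py m th i) with hyd
    have hmix : ∀ j, mixed x y m j = mk (mixed (px m th) (py m th) m j) := by
      intro j
      rw [mixed, mixed, map_prod]
      refine Finset.prod_congr rfl fun q _ => ?_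
      split_ifs <;> rfl
    have hC : ∀ b, mk (C b) = algebraMap B _ b := fun b => mk.commutes b
    have hrel : ∀ i < m, x i * y (i + 1) = x (i + 1) * y i := by
      intro i hi
      rw [← sub_eq_zero]
      simp only [hxd, hyd]
      rw [← map_mul, ← map_mul, ← map_sub, hmk0]
      exact Ideal.subset_span ⟨⟨i, hi⟩, rfl⟩
    set V := Submodule.span B (mixed x y m '' Set.Iio m) ⊔
      Submodule.span B {x 0 * mixed x y m 0} with hV
    have hVφ : ∀ p, mk p ∈ V → φ p = 0 := by
      have : V ≤ (LinearMap.ker φ).map mk.toLinearMap := by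
        refine sup_le (Submodule.span_le.mpr ?_) (Submodule.span_le.mpr ?_)
        · rintro _ ⟨j, hj, rfl⟩
          exact ⟨_, hφu ⟨j, hj⟩, (hmix j).symm⟩
        · rintro _ rfl
          exact ⟨_, hφw, by rw [hmix]; exact map_mul mk _ _⟩
      intro p hp
      obtain ⟨q, hq, hqp⟩ := this hp
      have h : φ (p - q) = 0 := hφf _ <| by
        rw [← hmk0, map_sub, sub_eq_zero]
        exact hqp.symm
      rw [← sub_add_cancel p q, map_add, h, zero_add]
      exact hq
    have hVmul : ∀ (a : MvPolynomial (Fin m) B), ∀ v ∈ V, mk a * v ∈ V := by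
      intro a
      induction a using MvPolynomial.induction_on with
      | C b =>
        intro v hv
        rw [hC, ← Algebra.smul_def]
        exact V.smul_mem _ hv
      | add p q hp hq =>
        intro v hv
        rw [map_add, add_mul]
        exact add_mem (hp v hv) (hq v hv)
      | mul_X p i hp =>
        intro v hv
        rw [map_mul, mul_assoc]
        refine hp _ ?_
        have h := mul_mem_span_mixed hrel hm th (hC _)
          (fun i _ => by simp only [hxd, hyd, py]; rw [map_add, hC])
          (by simp only [hxd]; rw [px_self, hC]) i.2 hv
        simp only [hxd] at h
        rw [px_of_lt i.2] at h
        exact h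
    intro p hp
    rw [Submodule.restrictScalars_mem, linkIdeal, Submodule.mem_sup] at hp
    obtain ⟨p1, hp1, p2, hp2, rfl⟩ := hp
    rw [LinearMap.mem_ker, map_add, hφf p1 hp1, zero_add]
    refine hVφ _ ?_
    refine Submodule.span_induction (p := fun q _ => mk q ∈ V) ?_ ?_ ?_ ?_ hp2
    · rintro _ ⟨j, hj, rfl⟩
      rw [← hmix]
      exact Submodule.mem_sup_left (Submodule.subset_span ⟨j, hj, rfl⟩)
    · simp
    · intro a b _ _ ha hb
      rw [map_add]; exact add_mem ha hb
    · intro a b _ hb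
      rw [smul_eq_mul, map_mul]
      exact hVmul a _ hb

end FreeQuotient

/-! ### The colon ideal -/

section Colon

variable {B : Type} [CommRing B] {m : ℕ} {th : ℕ → B}

/-- The binomial of the pair of end points of the path, in the new coordinates. -/
def endMinor (m : ℕ) (th : ℕ → B) : MvPolynomial (Fin m) B :=
  px m th 0 * py m th m - px m th m * py m th 0

/-- The specialization `th 0 = th (m + 1) = 1`, `th i = 0` otherwise, turns the equations of
`edgeIdeal` and `endMinor` into `c 0 ^ 2 = c 1`, `c i ^ 2 = c (i + 1) * c (i - 1)` and
`c 0 * c (m - 1) = 1`. Over a field they force all `c i` to be nonzero, whereas `mixed 0`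
specializes to `c 1 * ⋯ * c (m - 1)`. -/
lemma specialized_eq_top (hm : 0 < m) (I : Ideal B) (h0 : th 0 - 1 ∈ I) (h1 : th (m + 1) - 1 ∈ I)
    (hth : ∀ i < m, th (i + 1) ∈ I) :
    I.map (C : B →+* MvPolynomial (Fin m) B) ⊔ (linkIdeal m th ⊔ Ideal.span {endMinor m th}) =
      ⊤ := by
  by_contra hne
  obtain ⟨M, hM, hle⟩ := Ideal.exists_le_maximal _ hne
  let _ := Ideal.Quotient.field M
  set ρ := Ideal.Quotient.mk M with hρ
  have hz : ∀ p, p ∈ M → ρ p = 0 := fun p hp => Ideal.Quotient.eq_zero_iff_mem.mpr hp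
  have hI : ∀ b ∈ I, ρ (C b) = 0 := fun b hb =>
    hz _ (hle (Ideal.mem_sup_left (Ideal.mem_map_of_mem _ hb)))
  have hL : ∀ p ∈ linkIdeal m th, ρ p = 0 := fun p hp =>
    hz _ (hle (Ideal.mem_sup_right (Ideal.mem_sup_left hp)))
  have hy0 : ρ (py m th 0) = 1 := by
    have := hI _ h0
    rwa [map_sub, map_sub, map_one, map_one, sub_eq_zero] at this
  have hxm : ρ (px m th m) = 1 := by
    have := hI _ h1
    rw [map_sub, map_sub, map_one, map_one, sub_eq_zero] at this
    rwa [px_self]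
  have hy : ∀ i < m, ρ (py m th (i + 1)) = ρ (px m th i) := by
    intro i hi
    rw [py, map_add, hI _ (hth i hi), add_zero]
  have hrel : ∀ i < m, ρ (px m th i) * ρ (px m th i) = ρ (px m th (i + 1)) * ρ (py m th i) := by
    intro i hi
    have h : ρ (edgeMinor m th ⟨i, hi⟩) = 0 :=
      hL _ (Ideal.mem_sup_left (Ideal.subset_span ⟨_, rfl⟩))
    rw [edgeMinor, map_sub, map_mul, map_mul, hy i hi, sub_eq_zero] at h
    exact h
  have hG : ρ (px m th 0) ≠ 0 := by
    intro h
    have h2 : ρ (endMinor m th) = 0 :=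
      hz _ (hle (Ideal.mem_sup_right (Ideal.mem_sup_right (Ideal.mem_span_singleton_self _))))
    rw [endMinor, map_sub, map_mul, map_mul, h, hxm, hy0] at h2
    simp at h2
  have hne0 : ∀ i ≤ m, ρ (px m th i) ≠ 0 := by
    intro i
    induction i with
    | zero => exact fun _ => hG
    | succ i ih =>
      intro hi h
      have := hrel i (by omega)
      rw [h, zero_mul] at this
      exact ih (by omega) (mul_self_eq_zero.mp this)
  have hmix : ρ (mixed (px m th) (py m th) m 0) = 0 :=
    hL _ (Ideal.mem_sup_right (Ideal.subset_span ⟨0, hm, rfl⟩))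
  rw [mixed, map_prod, Finset.prod_eq_zero_iff] at hmix
  obtain ⟨q, hq, hq0⟩ := hmix
  rw [Finset.mem_Ico] at hq
  rw [if_neg (by omega)] at hq0
  exact hne0 q (by omega) hq0

lemma finite_quotient_linkIdeal (hm : 2 ≤ m) :
    Module.Finite B (MvPolynomial (Fin m) B ⧸ linkIdeal m th) := by
  obtain ⟨φ, hφ, hker⟩ := exists_linkIdeal_coords (th := th) hm
  have e1 := (LinearMap.quotKerEquivOfSurjective φ hφ).symm
  rw [hker] at e1
  exact Module.Finite.equiv (e1.trans (Submodule.Quotient.restrictScalarsEquiv B (linkIdeal m th)))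

lemma free_quotient_linkIdeal (hm : 2 ≤ m) :
    Module.Free B (MvPolynomial (Fin m) B ⧸ linkIdeal m th) := by
  obtain ⟨φ, hφ, hker⟩ := exists_linkIdeal_coords (th := th) hm
  have e1 := (LinearMap.quotKerEquivOfSurjective φ hφ).symm
  rw [hker] at e1
  exact Module.Free.of_equiv (e1.trans (Submodule.Quotient.restrictScalarsEquiv B (linkIdeal m th)))

lemma linkIdeal_ne_top [Nontrivial B] (hm : 2 ≤ m) : linkIdeal m th ≠ ⊤ := by
  obtain ⟨φ, hφ, hker⟩ := exists_linkIdeal_coords (th := th) hm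
  intro h
  rw [h] at hker
  obtain ⟨p, hp⟩ := hφ 1
  have hp0 : p ∈ LinearMap.ker φ := by rw [hker]; trivial
  rw [LinearMap.mem_ker, hp] at hp0
  exact one_ne_zero (congr_fun hp0 ⟨∅, by simpa using hm⟩)

/-- Since the quotient by `linkIdeal` is finite over `B` and the specialized system has no
solution, Nakayama's lemma yields a nonzero constant in `linkIdeal + (endMinor)`. As the quotient
by `linkIdeal` is torsion-free, `endMinor` is a nonzerodivisor on it. -/
lemma edgeIdeal_colon [IsDomain B] (hm : 2 ≤ m) (I : Ideal B) (hI : I ≠ ⊤) (h0 : th 0 - 1 ∈ I)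
    (h1 : th (m + 1) - 1 ∈ I) (hth : ∀ i < m, th (i + 1) ∈ I) :
    (edgeIdeal m th).colon (Ideal.span {endMinor m th} : Ideal (MvPolynomial (Fin m) B)) =
      linkIdeal m th := by
  apply le_antisymm
  · intro p hp
    rw [Ideal.mem_colon_span_singleton] at hp
    set Q := linkIdeal m th ⊔ Ideal.span {endMinor m th} with hQ
    obtain ⟨b, hb1, hb⟩ : ∃ b : B, b - 1 ∈ I ∧ C b ∈ Q := by
      have := finite_quotient_linkIdeal (th := th) hm
      have : Module.Finite B (MvPolynomial (Fin m) B ⧸ Q) :=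
        Module.Finite.of_surjective
          (Ideal.Quotient.factorₐ B (le_sup_left : linkIdeal m th ≤ Q)).toLinearMap
          (Ideal.Quotient.factor_surjective le_sup_left)
      have htop : I.map (algebraMap B (MvPolynomial (Fin m) B ⧸ Q)) = ⊤ := by
        have h := congrArg (Ideal.map (Ideal.Quotient.mk Q)) (specialized_eq_top (by omega) I h0 h1 hth)
        rw [Ideal.map_sup, Ideal.map_quotient_self, sup_bot_eq, Ideal.map_top, Ideal.map_map] at h
        exact h
      obtain ⟨b, hb1, hb⟩ := Submodule.exists_sub_one_mem_and_smul_eq_zero_of_fg_of_le_smul I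
        (⊤ : Submodule B (MvPolynomial (Fin m) B ⧸ Q)) Module.Finite.fg_top (by
          rw [Ideal.smul_top_eq_map, htop]; exact fun _ _ => trivial)
      refine ⟨b, hb1, ?_⟩
      have := hb 1 trivial
      rw [Algebra.smul_def, mul_one] at this
      exact Ideal.Quotient.eq_zero_iff_mem.mp this
    have hb0 : b ≠ 0 := by
      rintro rfl
      rw [zero_sub, neg_mem_iff] at hb1
      exact hI ((Ideal.eq_top_iff_one I).mpr hb1)
    have hbp : C b * p ∈ linkIdeal m th := by
      obtain ⟨q, hq, r, hr, hqr⟩ := Submodule.mem_sup.mp hb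
      obtain ⟨s, rfl⟩ := Ideal.mem_span_singleton'.mp hr
      rw [← hqr, add_mul]
      refine add_mem (Ideal.mul_mem_right _ _ hq) ?_
      rw [mul_assoc, mul_comm _ p]
      exact Ideal.mul_mem_left _ _ (Ideal.mem_sup_left hp)
    obtain ⟨φ, -, hker⟩ := exists_linkIdeal_coords (th := th) hm
    have hmem : ∀ q, q ∈ linkIdeal m th ↔ φ q = 0 := fun q => by
      rw [← LinearMap.mem_ker, hker, Submodule.restrictScalars_mem]
    rw [hmem, ← smul_eq_C_mul, map_smul] at hbp
    rw [hmem]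
    exact (smul_eq_zero.mp hbp).resolve_left hb0
  · have hrel : ∀ i < m, Ideal.Quotient.mk (edgeIdeal m th) (px m th i) *
        Ideal.Quotient.mk (edgeIdeal m th) (py m th (i + 1)) =
        Ideal.Quotient.mk (edgeIdeal m th) (px m th (i + 1)) *
        Ideal.Quotient.mk (edgeIdeal m th) (py m th i) := by
      intro i hi
      rw [← sub_eq_zero, ← map_mul, ← map_mul, ← map_sub, Ideal.Quotient.eq_zero_iff_mem]
      exact Ideal.subset_span ⟨⟨i, hi⟩, rfl⟩
    refine sup_le (fun p hp => ?_) (Ideal.span_le.mpr ?_)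
    · rw [Ideal.mem_colon_span_singleton]
      exact Ideal.mul_mem_right _ _ hp
    · rintro _ ⟨j, hj, rfl⟩
      rw [SetLike.mem_coe, Ideal.mem_colon_span_singleton, ← Ideal.Quotient.eq_zero_iff_mem]
      have h := mixed_mul_minor (x := fun i => Ideal.Quotient.mk (edgeIdeal m th) (px m th i))
        (y := fun i => Ideal.Quotient.mk (edgeIdeal m th) (py m th i)) hrel j
      rw [← h, map_mul, endMinor, map_sub, map_mul, map_mul, mixed, mixed, map_prod]
      congr 1
      refine Finset.prod_congr rfl fun q _ => ?_
      split_ifs <;> rfl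

end Colon

/-! ### A criterion for Cohen-Macaulayness -/

section CohenMacaulay

open RingTheory.Sequence

lemma isRegular_X (K : Type) [Field K] (d : ℕ) :
    IsRegular (MvPolynomial (Fin d) K) (List.ofFn fun i : Fin d => (X i : MvPolynomial (Fin d) K)) := by
  have htake : ∀ i, i ≤ d → Ideal.ofList ((List.ofFn fun i : Fin d =>
      (X i : MvPolynomial (Fin d) K)).take i) =
      Ideal.span ((X : Fin d → MvPolynomial (Fin d) K) '' {j | (j : ℕ) < i}) := by
    intro i hi
    rw [Ideal.ofList]
    congr 1
    ext p
    simp only [Set.mem_ofPred_eq, List.mem_take_iff_getElem, List.length_ofFn, List.getElem_ofFn,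
      Set.mem_image]
    constructor
    · rintro ⟨j, hj, rfl⟩
      exact ⟨⟨j, by omega⟩, by simp only; omega, rfl⟩
    · rintro ⟨j, hj, rfl⟩
      exact ⟨j, by omega, rfl⟩
  refine ⟨⟨fun i hi => ?_⟩, ?_⟩
  · have hid : i < d := by simpa using hi
    rw [htake i hid.le, List.getElem_ofFn, isSMulRegular_quotient_iff_mem_of_smul_mem]
    intro p hp
    simp only [smul_eq_mul, Ideal.mul_top] at *
    rw [mem_ideal_span_X_image] at *
    intro a ha
    obtain ⟨j, hj, hja⟩ := hp (Finsupp.single ⟨i, hid⟩ 1 + a) (by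
      rw [mem_support_iff, coeff_X_mul]
      exact mem_support_iff.mp ha)
    refine ⟨j, hj, ?_⟩
    have hne : (⟨i, hid⟩ : Fin d) ≠ j := by
      rintro rfl
      exact lt_irrefl i hj
    simpa [Finsupp.single_apply, hne] using hja
  · intro h
    have h2 := htake d le_rfl
    rw [List.take_of_length_le (by simp)] at h2
    rw [h2, smul_eq_mul, Ideal.mul_top] at h
    have h1 : (1 : MvPolynomial (Fin d) K) ∈ Ideal.span
        ((X : Fin d → MvPolynomial (Fin d) K) '' {j | (j : ℕ) < d}) := by rw [← h]; trivial
    rw [mem_ideal_span_X_image] at h1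
    obtain ⟨j, _, hj⟩ := h1 0 (by simp)
    exact hj rfl

/-- The length of a regular sequence is at most the dimension, over an arbitrary ring. -/
lemma length_le_supportDim {R : Type} [CommRing R] (rs : List R) :
    ∀ (M : Type) [AddCommGroup M] [Module R M] [Module.Finite R M], IsRegular M rs →
      ((rs.length : ℕ) : WithBot ℕ∞) ≤ Module.supportDim R M := by
  induction rs with
  | nil =>
    intro M _ _ _ h
    have : Nontrivial M := by
      by_contra hM
      rw [not_nontrivial_iff_subsingleton] at hM
      exact h.top_ne_smul (Subsingleton.elim _ _)
    rw [List.length_nil, Nat.cast_zero, Module.supportDim, Order.krullDim_nonneg_iff]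
    exact (Module.nonempty_support_iff.mpr this).to_subtype
  | cons r rs ih =>
    intro M _ _ _ h
    rw [isRegular_cons_iff] at h
    refine le_trans ?_ (Module.supportDim_quotSMulTop_succ_le_of_notMem_minimalPrimes
      fun p hp => h.1.notMem_of_mem_minimalPrimes hp)
    rw [List.length_cons, Nat.cast_add, Nat.cast_one]
    exact add_le_add_left (ih _ h.2) 1

lemma ringKrullDim_le_of_isIntegral (A B : Type) [CommRing A] [CommRing B] [Algebra B A]
    [Algebra.IsIntegral B A] : ringKrullDim A ≤ ringKrullDim B :=
  Order.krullDim_le_of_strictMono (PrimeSpectrum.comap (algebraMap B A)) fun p q hpq => by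
    have := p.2
    exact Ideal.IsIntegral.comap_lt_comap (R := B) (I := p.asIdeal) (J := q.asIdeal) hpq

/-- A nonzero quotient of a polynomial ring `S` that is finite and free over a polynomial ring
`K[X 0, …, X (d - 1)]`, in such a way that the parameters `X i` act as elements `l i` of the graded
maximal ideal of `S`, is Cohen-Macaulay of dimension `d`: the `l i` form a regular sequence. -/
lemma isCMQuot_of_free (K : Type) [Field K] {σ : Type} [Finite σ] (J : Ideal (MvPolynomial σ K))
    (d : ℕ) (A : Type) [CommRing A] [Nontrivial A] [Algebra (MvPolynomial (Fin d) K) A]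
    [Module.Finite (MvPolynomial (Fin d) K) A] [Module.Free (MvPolynomial (Fin d) K) A]
    (e : (MvPolynomial σ K ⧸ J) ≃+* A) (l : Fin d → MvPolynomial σ K)
    (hl : ∀ i, l i ∈ mIdeal K σ)
    (hel : ∀ i, e (Ideal.Quotient.mk J (l i)) = algebraMap (MvPolynomial (Fin d) K) A (X i)) :
    IsCMQuot K J ∧ ringKrullDim (MvPolynomial σ K ⧸ J) = (d : ℕ) := by
  have hreg : IsRegular (MvPolynomial σ K ⧸ J) (List.ofFn l) := by
    have h := IsRegular.of_faithfullyFlat (S := A) (isRegular_X K d)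
    refine (AddEquiv.isRegular_congr (e := e.toAddEquiv) ?_).mpr h
    rw [List.map_ofFn, List.forall₂_iff_get]
    refine ⟨by simp, fun i h1 h2 x => ?_⟩
    simp only [List.get_eq_getElem, List.getElem_ofFn, Function.comp_apply, ← hel, smul_eq_mul]
    exact map_mul e (Ideal.Quotient.mk J _) x
  have hlen : ∀ rs : List (MvPolynomial σ K), IsRegular (MvPolynomial σ K ⧸ J) rs →
      ((rs.length : ℕ) : WithBot ℕ∞) ≤ ringKrullDim (MvPolynomial σ K ⧸ J) := by
    intro rs h
    rw [← Module.supportDim_quotient_eq_ringKrullDim]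
    exact length_le_supportDim rs _ h
  have hdim : ringKrullDim (MvPolynomial σ K ⧸ J) = (d : ℕ) := by
    apply le_antisymm
    · rw [ringKrullDim_eq_of_ringEquiv e]
      refine (ringKrullDim_le_of_isIntegral A (MvPolynomial (Fin d) K)).trans ?_
      rw [MvPolynomial.ringKrullDim_of_isNoetherianRing, ringKrullDim_eq_zero_of_field]
      simp
    · simpa using hlen _ hreg
  refine ⟨?_, hdim⟩
  rw [IsCMQuot, hdim]
  have : depth (mIdeal K σ) (MvPolynomial σ K ⧸ J) = (d : ℕ∞) := by
    apply le_antisymm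
    · refine sSup_le ?_
      rintro _ ⟨rs, rfl, -, h⟩
      have := hlen rs h
      rw [hdim] at this
      exact_mod_cast this
    · refine le_sSup ⟨List.ofFn l, by simp, ?_, hreg⟩
      intro r hr
      obtain ⟨i, rfl⟩ := List.mem_ofFn.mp hr
      exact hl i
  rw [this]
  rfl

end CohenMacaulay

/-! ### The linear change of coordinates -/

section Coordinates

variable (K : Type) [Field K] (m : ℕ)

/-- The parameters: the variables of the coefficient ring `K[X 0, …, X (m + 1)]`. -/
def param (i : ℕ) : MvPolynomial (Fin (m + 2)) K :=
  if h : i < m + 2 then X ⟨i, h⟩ else 0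

/-- The linear forms that become the parameters in the new coordinates: `y 0`, the differences
`y i - x (i - 1)` for `1 ≤ i ≤ m`, and `x m`. -/
def linForm (i : Fin (m + 2)) : MvPolynomial (Fin (m + 1) ⊕ Fin (m + 1)) K :=
  if h0 : (i : ℕ) = 0 then yv K 0
  else if h1 : (i : ℕ) = m + 1 then xv K (Fin.last m)
  else yv K ⟨i, by omega⟩ - xv K ⟨i - 1, by omega⟩

/-- The substitution of the new coordinates for the variables `x i`, `y i`. -/
def toParam : MvPolynomial (Fin (m + 1) ⊕ Fin (m + 1)) K →+*
    MvPolynomial (Fin m) (MvPolynomial (Fin (m + 2)) K) :=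
  eval₂Hom (C.comp C)
    (Sum.elim (fun i => px m (param K m) i) (fun i => py m (param K m) i))

/-- The inverse substitution. -/
def fromParam : MvPolynomial (Fin m) (MvPolynomial (Fin (m + 2)) K) →+*
    MvPolynomial (Fin (m + 1) ⊕ Fin (m + 1)) K :=
  eval₂Hom (eval₂Hom C (linForm K m)) (fun q => xv K q.castSucc)

lemma toParam_C (a : K) : toParam K m (C a) = C (C a) := by simp [toParam]

lemma toParam_xv (i : Fin (m + 1)) : toParam K m (xv K i) = px m (param K m) i := by
  simp [toParam, xv]

lemma toParam_yv (i : Fin (m + 1)) : toParam K m (yv K i) = py m (param K m) i := by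
  simp [toParam, yv]

lemma fromParam_X (q : Fin m) : fromParam K m (X q) = xv K q.castSucc := by
  simp [fromParam]

lemma fromParam_param {i : ℕ} (h : i < m + 2) :
    fromParam K m (C (param K m i)) = linForm K m ⟨i, h⟩ := by
  simp [fromParam, param, h]

lemma fromParam_px {i : ℕ} (h : i < m + 1) : fromParam K m (px m (param K m) i) = xv K ⟨i, h⟩ := by
  by_cases hi : i < m
  · rw [px_of_lt hi, fromParam_X]
    rfl
  · obtain rfl : i = m := by omega
    rw [px_self, fromParam_param _ _ (by omega), linForm, dif_neg (Nat.succ_ne_zero _),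
      dif_pos rfl]
    rfl

lemma fromParam_py {i : ℕ} (h : i < m + 1) : fromParam K m (py m (param K m) i) = yv K ⟨i, h⟩ := by
  cases i with
  | zero =>
    rw [py, fromParam_param _ _ (by omega), linForm, dif_pos rfl]
    rfl
  | succ i =>
    rw [py, map_add, fromParam_px _ _ (by omega), fromParam_param _ _ (by omega), linForm,
      dif_neg (Nat.succ_ne_zero _), dif_neg (by simp only; omega)]
    simp

lemma toParam_linForm (i : Fin (m + 2)) : toParam K m (linForm K m i) = C (X i) := by
  obtain ⟨i, hi⟩ := i
  have hp : param K m i = X ⟨i, hi⟩ := dif_pos hi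
  rw [linForm]
  split_ifs with h0 h1
  · simp only at h0
    subst h0
    rw [toParam_yv, ← hp]
    rfl
  · simp only at h1
    subst h1
    rw [toParam_xv, ← hp]
    exact px_self
  · obtain ⟨j, rfl⟩ := Nat.exists_eq_succ_of_ne_zero h0
    rw [map_sub, toParam_yv, toParam_xv, ← hp]
    simp [py]

/-- The linear change of coordinates as a ring isomorphism. -/
def paramEquiv : MvPolynomial (Fin (m + 1) ⊕ Fin (m + 1)) K ≃+*
    MvPolynomial (Fin m) (MvPolynomial (Fin (m + 2)) K) :=
  RingEquiv.ofRingHom (toParam K m) (fromParam K m)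
    (by
      refine MvPolynomial.ringHom_ext' (MvPolynomial.ringHom_ext (fun a => ?_) fun i => ?_)
        fun q => ?_
      · simp [fromParam, toParam_C]
      · simp [fromParam, toParam_linForm]
      · rw [RingHom.comp_apply, fromParam_X, toParam_xv]
        exact px_of_lt q.2)
    (by
      refine MvPolynomial.ringHom_ext (fun a => ?_) ?_
      · simp [fromParam, toParam_C]
      · rintro (i | i)
        · exact (congrArg _ (toParam_xv K m i)).trans (fromParam_px K m i.2)
        · exact (congrArg _ (toParam_yv K m i)).trans (fromParam_py K m i.2))

lemma map_bei : (bei K (lineG (m + 1))).map (paramEquiv K m) = edgeIdeal m (param K m) := by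
  rw [bei, Ideal.map_span, edgeIdeal]
  congr 1
  have h : ∀ i : Fin m, paramEquiv K m (xv K i.castSucc * yv K i.succ - xv K i.succ * yv K i.castSucc)
      = edgeMinor m (param K m) i := by
    intro i
    change toParam K m _ = _
    rw [map_sub, map_mul, map_mul, toParam_xv, toParam_xv, toParam_yv, toParam_yv]
    rfl
  ext p
  constructor
  · rintro ⟨_, ⟨i, j, hij, hadj, rfl⟩, rfl⟩
    have hj : (j : ℕ) = i + 1 := by
      rw [lineG, SimpleGraph.fromRel_adj] at hadj
      have := Fin.lt_def.mp hij
      rcases hadj.2 with h | h <;> omega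
    have hjm := j.2
    refine ⟨⟨i, by omega⟩, ?_⟩
    rw [← h]
    have e1 : (⟨i, by omega⟩ : Fin m).castSucc = i := rfl
    have e2 : (⟨i, by omega⟩ : Fin m).succ = j := Fin.ext hj.symm
    rw [e1, e2]
  · rintro ⟨i, rfl⟩
    refine ⟨_, ⟨i.castSucc, i.succ, Fin.castSucc_lt_succ, ?_, rfl⟩, h i⟩
    rw [lineG, SimpleGraph.fromRel_adj]
    exact ⟨Fin.castSucc_lt_succ.ne, Or.inl (by simp)⟩

lemma paramEquiv_gElt (h : 0 < m + 1) :
    paramEquiv K m (gElt K h) = endMinor m (param K m) := by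
  change toParam K m _ = _
  rw [gElt, map_sub, map_mul, map_mul, toParam_xv, toParam_xv, toParam_yv, toParam_yv]
  rfl

/-- The ideal of the point of the parameter space with first and last coordinates `1` and all
others `0`. -/
lemma exists_specialization : ∃ I : Ideal (MvPolynomial (Fin (m + 2)) K), I ≠ ⊤ ∧
    param K m 0 - 1 ∈ I ∧ param K m (m + 1) - 1 ∈ I ∧ ∀ i < m, param K m (i + 1) ∈ I := by
  refine ⟨RingHom.ker (eval fun i : Fin (m + 2) => if (i : ℕ) = 0 ∨ (i : ℕ) = m + 1 then (1 : K) else 0),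
    RingHom.ker_ne_top _, ?_, ?_, fun i hi => ?_⟩
  · simp [RingHom.mem_ker, param]
  · simp [RingHom.mem_ker, param]
  · simp only [RingHom.mem_ker, param]
    rw [dif_pos (by omega), eval_X, if_neg]
    simp only
    omega

lemma colon_eq_comap (hm : 2 ≤ m) (h : 0 < m + 1) :
    (bei K (lineG (m + 1))).colon
      (Ideal.span {gElt K h} : Ideal (MvPolynomial (Fin (m + 1) ⊕ Fin (m + 1)) K)) =
      (linkIdeal m (param K m)).comap (paramEquiv K m) := by
  obtain ⟨I, hI, h0, h1, hth⟩ := exists_specialization K m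
  ext p
  rw [Ideal.mem_colon_span_singleton, Ideal.mem_comap, ← edgeIdeal_colon hm I hI h0 h1 hth,
    Ideal.mem_colon_span_singleton, ← paramEquiv_gElt K m h, ← map_mul, ← map_bei,
    ← Ideal.mem_comap, Ideal.comap_map_of_bijective _ (paramEquiv K m).bijective]

lemma linForm_mem (i : Fin (m + 2)) : linForm K m i ∈ mIdeal K (Fin (m + 1) ⊕ Fin (m + 1)) := by
  have hX : ∀ s, (X s : MvPolynomial (Fin (m + 1) ⊕ Fin (m + 1)) K) ∈ mIdeal K _ :=
    fun s => Ideal.subset_span ⟨s, rfl⟩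
  rw [linForm]
  split_ifs
  · exact hX _
  · exact hX _
  · exact sub_mem (hX _) (hX _)

end Coordinates

/-- Let `L` be the line (path) on `[n]` (`n ≥ 3`), `I_L` its
binomial edge ideal, and `g = x_1 y_n − x_n y_1`.  Then `S/(I_L : g)` is a
Cohen-Macaulay ring of Krull dimension `n + 1`. -/
theorem statement12 (K : Type) [Field K] (n : ℕ) (hn : 3 ≤ n) :
    IsCMQuot K ((bei K (lineG n)).colon (Ideal.span {gElt K (show 0 < n by omega)})) ∧
    ringKrullDim (MvPolynomial (Fin n ⊕ Fin n) K ⧸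
      (bei K (lineG n)).colon (Ideal.span {gElt K (show 0 < n by omega)})) =
        (n + 1 : ℕ) := by
  obtain ⟨m, rfl⟩ : ∃ m, n = m + 1 := ⟨n - 1, by omega⟩
  have hm : 2 ≤ m := by omega
  have := finite_quotient_linkIdeal (th := param K m) hm
  have := free_quotient_linkIdeal (th := param K m) hm
  have : Nontrivial (MvPolynomial (Fin m) (MvPolynomial (Fin (m + 2)) K) ⧸
      linkIdeal m (param K m)) := Ideal.Quotient.nontrivial_iff.mpr (linkIdeal_ne_top hm)
  refine isCMQuot_of_free K _ (m + 2)
    (MvPolynomial (Fin m) (MvPolynomial (Fin (m + 2)) K) ⧸ linkIdeal m (param K m))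
    (Ideal.quotientEquiv _ _ (paramEquiv K m) ?_) (linForm K m) (linForm_mem K m) fun i => ?_
  · rw [colon_eq_comap K m hm]
    exact (Ideal.map_comap_of_surjective _ (paramEquiv K m).surjective _).symm
  · rw [Ideal.quotientEquiv_mk]
    exact congrArg _ (toParam_linForm K m i)

end BEIPaper
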